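/- Let H₁ and H₂ be connected combinatorial hypermaps on disjoint flag sets, and let H₁ ⊕ H₂ be a bar-amalgamation of H₁ and H₂ (the connecting hyperedge meeting one corner of H₁ and one corner of H₂). Then the partial-dual Euler-genus polynomial satisfies ∂ε_{H₁ ⊕ H₂}(z) = 2 · ∂ε_{H₁}(z) · ∂ε_{H₂}(z). -/

import Mathlib

open Classical

/-- A pre-hypermap on a set of flags `F`: three structure maps `θ₀, θ₁, θ₂`.
It is a genuine combinatorial hypermap when the three maps are
fixed-point-free involutions (see `PreHypermap.IsHypermap`). -/
structure PreHypermap (F : Type*) where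
  theta : Fin 3 → F → F

namespace PreHypermap

variable {F : Type*}

/-- `H` is a combinatorial hypermap: `θ₀, θ₁, θ₂` are fixed-point-free involutions. -/
def IsHypermap (H : PreHypermap F) : Prop :=
  ∀ i : Fin 3, Function.Involutive (H.theta i) ∧ ∀ x : F, H.theta i x ≠ x

/-- The equivalence relation on `F` generated by a set of functions `F → F`;
for a set of involutions, two flags are related iff they are in the same orbit
of the subgroup generated by those involutions. -/
def orbitRel (fs : Set (F → F)) : F → F → Prop :=
  Relation.EqvGen (fun x y => ∃ f ∈ fs, f x = y)

/-- The setoid of orbits of the subgroup generated by a set of involutions. -/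
def orbitSetoid (fs : Set (F → F)) : Setoid F :=
  Relation.EqvGen.setoid (fun x y => ∃ f ∈ fs, f x = y)

/-- The number of orbits on `F` of the subgroup generated by a set of involutions. -/
noncomputable def orbitCount (fs : Set (F → F)) : ℕ :=
  Nat.card (Quotient (orbitSetoid fs))

/-- `v H`: the number of vertices, i.e. orbits of `⟨θ₁, θ₂⟩`. -/
noncomputable def v (H : PreHypermap F) : ℕ := orbitCount {H.theta 1, H.theta 2}

/-- `e H`: the number of hyperedges, i.e. orbits of `⟨θ₀, θ₂⟩`. -/
noncomputable def e (H : PreHypermap F) : ℕ := orbitCount {H.theta 0, H.theta 2}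

/-- `f H`: the number of faces, i.e. orbits of `⟨θ₀, θ₁⟩`. -/
noncomputable def f (H : PreHypermap F) : ℕ := orbitCount {H.theta 0, H.theta 1}

/-- `c H`: the number of components, i.e. orbits of `⟨θ₀, θ₁, θ₂⟩`. -/
noncomputable def c (H : PreHypermap F) : ℕ :=
  orbitCount {H.theta 0, H.theta 1, H.theta 2}

/-- `H` is connected if it has exactly one component. -/
def Connected (H : PreHypermap F) : Prop := H.c = 1

/-- The Euler characteristic `χ(H) = v + e + f - |F|/2`. -/
noncomputable def chi (H : PreHypermap F) : ℤ :=
  (H.v : ℤ) + (H.e : ℤ) + (H.f : ℤ) - (Nat.card F : ℤ) / 2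

/-- The Euler genus `ε(H) = 2 c(H) - χ(H)`. -/
noncomputable def eulerGenus (H : PreHypermap F) : ℤ := 2 * (H.c : ℤ) - H.chi

/-- `H` is orientable: there is `o : F → {+1, -1}` with `o (θᵢ x) = - o x` for all `i, x`. -/
def Orientable (H : PreHypermap F) : Prop :=
  ∃ o : F → ℤ, (∀ x : F, o x = 1 ∨ o x = -1) ∧
    ∀ (i : Fin 3) (x : F), o (H.theta i x) = - o x

/-- The set `E(H)` of hyperedges of `H`, each hyperedge being its set of flags
(an orbit of `⟨θ₀, θ₂⟩`). -/
def edges (H : PreHypermap F) : Set (Set F) :=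
  {s : Set F | ∃ x : F, s = {y : F | orbitRel {H.theta 0, H.theta 2} x y}}

/-- The geometric dual `H* = (F, θ₂, θ₁, θ₀)`. -/
def dual (H : PreHypermap F) : PreHypermap F where
  theta := fun i => H.theta (2 - i)

/-- The partial dual of `H` with respect to a set `S` of flags (interchange `θ₀` and
`θ₂` on `S`); for `A ⊆ E(H)` the partial dual `H^A` is `H.pdual (⋃₀ A)`. -/
noncomputable def pdual (H : PreHypermap F) (S : Set F) : PreHypermap F where
  theta := fun i x =>
    if i = 1 then H.theta 1 x
    else if x ∈ S then H.theta (2 - i) x else H.theta i x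

/-- `f(A)` for `A ⊆ E(H)`: the number of orbits of `⟨θ₁, θ₂^A⟩` (which equals `v(H^A)`). -/
noncomputable def subf (H : PreHypermap F) (A : Set (Set F)) : ℕ :=
  (H.pdual (⋃₀ A)).v

/-- `c(A)` for `A ⊆ E(H)`: the number of orbits of the subgroup generated by `θ₁`, `θ₂`
and the permutation equal to `θ₀` on `S(A)` and the identity elsewhere. -/
noncomputable def subc (H : PreHypermap F) (A : Set (Set F)) : ℕ :=
  orbitCount {H.theta 1, H.theta 2, fun x => if x ∈ ⋃₀ A then H.theta 0 x else x}

/-- `χ(A) = v(A) + e(A) + f(A) - |S(A)|/2` for `A ⊆ E(H)`, where `v(A) = v(H)`,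
`e(A) = |A|`, `f(A) = v(H^A)` and `S(A) = ⋃₀ A`. -/
noncomputable def subchi (H : PreHypermap F) (A : Set (Set F)) : ℤ :=
  (H.v : ℤ) + (A.ncard : ℤ) + (H.subf A : ℤ) - ((⋃₀ A).ncard : ℤ) / 2

/-- `ε(A) = 2 c(A) - χ(A)` for `A ⊆ E(H)`. -/
noncomputable def subeps (H : PreHypermap F) (A : Set (Set F)) : ℤ :=
  2 * (H.subc A : ℤ) - H.subchi A

/-- The hyperedge set of `H` as a finset. -/
noncomputable def edgeFinset (H : PreHypermap F) [Fintype F] : Finset (Set F) :=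
  (Set.toFinite H.edges).toFinset

/-- The partial-dual Euler-genus polynomial `∂ε_H(z) = Σ_{A ⊆ E(H)} z^(ε(H^A))`. -/
noncomputable def pdPoly (H : PreHypermap F) [Fintype F] : Polynomial ℕ :=
  ∑ A ∈ H.edgeFinset.powerset,
    Polynomial.X ^ ((H.pdual (⋃₀ (A : Set (Set F)))).eulerGenus).toNat

/-- The partial-dual orientable-genus polynomial `∂Γ_H(z) = Σ_{A ⊆ E(H)} z^(ε(H^A)/2)`. -/
noncomputable def pdGammaPoly (H : PreHypermap F) [Fintype F] : Polynomial ℕ :=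
  ∑ A ∈ H.edgeFinset.powerset,
    Polynomial.X ^ (((H.pdual (⋃₀ (A : Set (Set F)))).eulerGenus) / 2).toNat

/-- The join `H₁ ∨ H₂` of two hypermaps on disjoint flag sets, joining the corner
`{x, θ₁ x}` of `H₁` to the corner `{y, θ₁′ y}` of `H₂`. -/
noncomputable def join {F₁ F₂ : Type*} (H₁ : PreHypermap F₁) (H₂ : PreHypermap F₂)
    (x : F₁) (y : F₂) : PreHypermap (F₁ ⊕ F₂) where
  theta := fun i z =>
    if i = 1 then
      if z = Sum.inl x then Sum.inr y
      else if z = Sum.inr y then Sum.inl x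
      else if z = Sum.inl (H₁.theta 1 x) then Sum.inr (H₂.theta 1 y)
      else if z = Sum.inr (H₂.theta 1 y) then Sum.inl (H₁.theta 1 x)
      else Sum.map (H₁.theta 1) (H₂.theta 1) z
    else Sum.map (H₁.theta i) (H₂.theta i) z

/-- The bar-amalgamation `H₁ ⊕ H₂` of two hypermaps on disjoint flag sets, with a new
connecting hyperedge `{p, q, p', q'} = Fin 4` meeting the corner `{x, θ₁ x}` of `H₁`
and the corner `{y, θ₁′ y}` of `H₂`. -/
noncomputable def bar {F₁ F₂ : Type*} (H₁ : PreHypermap F₁) (H₂ : PreHypermap F₂)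
    (x : F₁) (y : F₂) : PreHypermap ((F₁ ⊕ F₂) ⊕ Fin 4) where
  theta := fun i z =>
    if i = 0 then
      match z with
      | .inl (.inl a) => .inl (.inl (H₁.theta 0 a))
      | .inl (.inr b) => .inl (.inr (H₂.theta 0 b))
      | .inr k => .inr (Equiv.swap (0 : Fin 4) 2 (Equiv.swap (1 : Fin 4) 3 k))
    else if i = 2 then
      match z with
      | .inl (.inl a) => .inl (.inl (H₁.theta 2 a))
      | .inl (.inr b) => .inl (.inr (H₂.theta 2 b))
      | .inr k => .inr (Equiv.swap (0 : Fin 4) 1 (Equiv.swap (2 : Fin 4) 3 k))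
    else
      if z = .inl (.inl x) then .inr 0
      else if z = .inr 0 then .inl (.inl x)
      else if z = .inl (.inl (H₁.theta 1 x)) then .inr 1
      else if z = .inr 1 then .inl (.inl (H₁.theta 1 x))
      else if z = .inl (.inr y) then .inr 2
      else if z = .inr 2 then .inl (.inr y)
      else if z = .inl (.inr (H₂.theta 1 y)) then .inr 3
      else if z = .inr 3 then .inl (.inr (H₂.theta 1 y))
      else
        match z with
        | .inl (.inl a) => .inl (.inl (H₁.theta 1 a))
        | .inl (.inr b) => .inl (.inr (H₂.theta 1 b))
        | .inr k => .inr k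

end PreHypermap

namespace PreHypermap

section aux
variable {F : Type*}

/-- functions invariant under `fs` -/
def InvF (fs : Set (F → F)) : Submodule (ZMod 2) (F → ZMod 2) where
  carrier := {g | ∀ f ∈ fs, ∀ x, g (f x) = g x}
  add_mem' := by
    intro a b ha hb f hf x
    simp [ha f hf x, hb f hf x]
  zero_mem' := by intro f _ x; rfl
  smul_mem' := by
    intro c a ha f hf x
    simp [ha f hf x]

lemma mem_InvF {fs : Set (F → F)} {g : F → ZMod 2} :
    g ∈ InvF fs ↔ ∀ f ∈ fs, ∀ x, g (f x) = g x := Iff.rfl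

lemma InvF_eqvGen {fs : Set (F → F)} {g : F → ZMod 2} (hg : g ∈ InvF fs) {a b : F}
    (h : orbitRel fs a b) : g a = g b := by
  induction h with
  | rel a b h => obtain ⟨f, hf, rfl⟩ := h; exact (hg f hf a).symm
  | refl => rfl
  | symm _ _ _ ih => exact ih.symm
  | trans _ _ _ _ _ i1 i2 => exact i1.trans i2

/-- invariant functions are functions on the quotient -/
noncomputable def invEquiv (fs : Set (F → F)) :
    InvF fs ≃ₗ[ZMod 2] (Quotient (orbitSetoid fs) → ZMod 2) where
  toFun g := fun q => Quotient.lift (s := orbitSetoid fs) g.1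
    (fun _ _ h => InvF_eqvGen g.2 h) q
  map_add' := by
    intro a b; funext q; induction q using Quotient.inductionOn; rfl
  map_smul' := by
    intro a b; funext q; induction q using Quotient.inductionOn; rfl
  invFun h := ⟨fun x => h (Quotient.mk _ x), by
    intro f hf x
    have : (Quotient.mk (orbitSetoid fs) (f x)) = Quotient.mk _ x :=
      Quotient.sound (s := orbitSetoid fs)
        (Relation.EqvGen.symm _ _ (Relation.EqvGen.rel _ _ ⟨f, hf, rfl⟩))
    simp only [this]⟩
  left_inv := by intro g; rfl
  right_inv := by
    intro h; funext q; induction q using Quotient.inductionOn; rfl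

lemma orbitCount_eq [Fintype F] (fs : Set (F → F)) :
    orbitCount fs = Module.finrank (ZMod 2) (InvF fs) := by
  rw [(invEquiv fs).finrank_eq]
  have : Fintype (Quotient (orbitSetoid fs)) := Fintype.ofFinite _
  rw [Module.finrank_fintype_fun_eq_card, orbitCount, Nat.card_eq_fintype_card]

lemma z2_add_self (a : ZMod 2) : a + a = 0 := CharTwo.add_self_eq_zero a

lemma sum_inv [Fintype F] {a : F → F} (ha : Function.Involutive a) (hf : ∀ x, a x ≠ x)
    {g : F → ZMod 2} (hg : ∀ x, g (a x) = g x) : ∑ x, g x = 0 := by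
  refine Finset.sum_involution (fun x _ => a x) ?_ ?_ ?_ ?_
  · intro x _; rw [hg]; exact z2_add_self _
  · intro x _ _; exact hf x
  · intro x _; exact Finset.mem_univ _
  · intro x _; exact ha x

lemma parity [Fintype F] {a b : F → F} (ha : Function.Involutive a) (hfa : ∀ x, a x ≠ x)
    (hb : Function.Involutive b) (hfb : ∀ x, b x ≠ x) {g : F → ZMod 2}
    (hga : ∀ x, g (a x) = g x) (x : F) (hgb : ∀ z, z ≠ x → z ≠ b x → g (b z) = g z) :
    g (b x) = g x := by
  have h1 := sum_inv ha hfa hga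
  have h2 : ∑ z, (if z = x ∨ z = b x then 0 else g z) = 0 := by
    apply sum_inv hb hfb
    intro z
    have e1 : b z = x ↔ z = b x := ⟨fun h => by rw [← h, hb], fun h => by rw [h, hb]⟩
    have e2 : b z = b x ↔ z = x := hb.injective.eq_iff
    rw [e1, e2]
    by_cases p : z = x <;> by_cases q : z = b x <;> simp [p, q]
    exact hgb z p q
  have h3 : ∑ z, (g z - (if z = x ∨ z = b x then 0 else g z)) = g x + g (b x) := by
    have : ∀ z, (g z - (if z = x ∨ z = b x then 0 else g z))
        = (if z = x then g z else 0) + (if z = b x then g z else 0) := by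
      intro z
      by_cases p : z = x
      · subst p; simp [(hfb z).symm]
      · by_cases q : z = b x <;> simp [p, q, hfb x]
    simp only [this, Finset.sum_add_distrib, Finset.sum_ite_eq', Finset.mem_univ, if_true]
  rw [Finset.sum_sub_distrib, h1, h2, sub_zero] at h3
  exact ((CharTwo.add_eq_zero).1 h3.symm).symm

lemma even_card [Fintype F] {a : F → F} (ha : Function.Involutive a) (hf : ∀ x, a x ≠ x) :
    (Nat.card F) % 2 = 0 := by
  have := sum_inv (g := fun _ => 1) ha hf (fun _ => rfl)
  simp only [Finset.sum_const, Finset.card_univ, nsmul_eq_mul, mul_one] at this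
  rw [Nat.card_eq_fintype_card]
  exact Nat.mod_eq_zero_of_dvd ((ZMod.natCast_eq_zero_iff _ _).1 this)

lemma half_le [Fintype F] {a : F → F} (ha : Function.Involutive a) :
    Nat.card F ≤ 2 * Module.finrank (ZMod 2) (InvF ({a} : Set (F → F))) := by
  let T : (F → ZMod 2) →ₗ[ZMod 2] (F → ZMod 2) :=
    LinearMap.id + LinearMap.funLeft (ZMod 2) (ZMod 2) a
  have hT : ∀ g x, T g x = g x + g (a x) := fun g x => rfl
  have hk : LinearMap.ker T = InvF {a} := by
    ext g
    rw [LinearMap.mem_ker, mem_InvF]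
    simp only [Set.mem_singleton_iff, forall_eq]
    rw [funext_iff]
    refine forall_congr' fun x => ?_
    rw [hT, Pi.zero_apply, CharTwo.add_eq_zero, eq_comm]
  have hr : LinearMap.range T ≤ LinearMap.ker T := by
    rintro _ ⟨g, rfl⟩
    rw [LinearMap.mem_ker]
    funext x
    rw [hT, hT, hT, ha, Pi.zero_apply, add_comm (g (a x))]
    exact z2_add_self _
  have h1 := LinearMap.finrank_range_add_finrank_ker T
  have h2 := Submodule.finrank_mono hr
  rw [Module.finrank_fintype_fun_eq_card] at h1
  rw [hk] at h1 h2
  rw [Nat.card_eq_fintype_card]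
  omega

lemma orth_le [Fintype F] (U W : Submodule (ZMod 2) (F → ZMod 2))
    (h : ∀ f ∈ U, ∀ g ∈ W, ∑ x, f x * g x = 0) :
    Module.finrank (ZMod 2) U + Module.finrank (ZMod 2) W ≤ Nat.card F := by
  let D : (F → ZMod 2) →ₗ[ZMod 2] Module.Dual (ZMod 2) (F → ZMod 2) :=
    (dotProductBilin (ZMod 2) (ZMod 2))
  have hD : ∀ f g, D f g = ∑ x, f x * g x := fun f g => rfl
  have hinj : Function.Injective D := by
    rw [injective_iff_map_eq_zero]
    intro f hf
    funext x
    have := congrArg (fun t => t (Pi.single x 1)) hf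
    simpa [hD, Pi.single_apply] using this
  have h1 : U.map D ≤ W.dualAnnihilator := by
    rintro _ ⟨f, hf, rfl⟩
    rw [Submodule.mem_dualAnnihilator]
    intro g hg
    rw [hD]; exact h f hf g hg
  have h2 := Submodule.finrank_mono h1
  rw [← (Submodule.equivMapOfInjective D hinj U).finrank_eq] at h2
  have h3 := Subspace.finrank_add_finrank_dualAnnihilator_eq W
  rw [Module.finrank_fintype_fun_eq_card] at h3
  rw [Nat.card_eq_fintype_card]
  omega

lemma eulerGenus_nonneg [Fintype F] (H : PreHypermap F) (h : H.IsHypermap) :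
    0 ≤ H.eulerGenus := by
  have hev := even_card (h 0).1 (h 0).2
  have hh := half_le (h 0).1
  have key : ∀ i : Fin 3, ∀ f g : F → ZMod 2, (∀ x, f (H.theta i x) = f x) →
      (∀ x, g (H.theta i x) = g x) → ∑ x, f x * g x = 0 := by
    intro i f g hf hg
    exact sum_inv (g := fun x => f x * g x) (h i).1 (h i).2 (fun x => by simp only [hf, hg])
  set V0 := InvF {H.theta 0} with hV0
  set V12 := InvF {H.theta 1, H.theta 2} with hV12
  set V01 := InvF {H.theta 0, H.theta 1} with hV01
  set V02 := InvF {H.theta 0, H.theta 2} with hV02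
  set V := InvF {H.theta 0, H.theta 1, H.theta 2} with hV
  have i1 : V12 ⊓ V0 = V := by
    ext g
    simp [hV12, hV0, hV, mem_InvF]
    tauto
  have i2 : V01 ⊓ V02 = V := by
    ext g
    simp [hV01, hV02, hV, mem_InvF]
    tauto
  have d1 := Submodule.finrank_sup_add_finrank_inf_eq V12 V0
  have d2 := Submodule.finrank_sup_add_finrank_inf_eq V01 V02
  rw [i1] at d1
  rw [i2] at d2
  have o := orth_le (V12 ⊔ V0) (V01 ⊔ V02) (by
    intro f hf g hg
    obtain ⟨f1, hf1, f2, hf2, rfl⟩ := Submodule.mem_sup.1 hf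
    obtain ⟨g1, hg1, g2, hg2, rfl⟩ := Submodule.mem_sup.1 hg
    simp only [hV12, hV0, hV01, hV02, mem_InvF, Set.mem_insert_iff, Set.mem_singleton_iff,
      forall_eq_or_imp, forall_eq] at hf1 hf2 hg1 hg2
    simp only [Pi.add_apply, add_mul, mul_add, Finset.sum_add_distrib]
    rw [key 1 f1 g1 hf1.1 hg1.2, key 2 f1 g2 hf1.2 hg2.2, key 0 f2 g1 hf2 hg1.1,
      key 0 f2 g2 hf2 hg2.1]
    simp)
  unfold eulerGenus chi v e PreHypermap.f c
  rw [orbitCount_eq, orbitCount_eq, orbitCount_eq, orbitCount_eq]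
  rw [← hV12, ← hV02, ← hV01, ← hV]
  omega

lemma dual_isHypermap {H : PreHypermap F} (h : H.IsHypermap) : H.dual.IsHypermap :=
  fun i => h (2 - i)

lemma dual_theta0 (H : PreHypermap F) : H.dual.theta 0 = H.theta 2 := rfl
lemma dual_theta1 (H : PreHypermap F) : H.dual.theta 1 = H.theta 1 := rfl
lemma dual_theta2 (H : PreHypermap F) : H.dual.theta 2 = H.theta 0 := rfl

lemma dual_c (H : PreHypermap F) : H.dual.c = H.c := by
  unfold c
  rw [dual_theta0, dual_theta1, dual_theta2]
  congr 1
  ext; simp; tauto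

lemma dual_eulerGenus (H : PreHypermap F) : H.dual.eulerGenus = H.eulerGenus := by
  unfold eulerGenus
  rw [dual_c]
  unfold chi v e PreHypermap.f
  rw [dual_theta0, dual_theta1, dual_theta2, Set.pair_comm (H.theta 1) (H.theta 0),
    Set.pair_comm (H.theta 2) (H.theta 0), Set.pair_comm (H.theta 2) (H.theta 1)]
  ring

/-- saturated sets of flags -/
def Sat (H : PreHypermap F) (S : Set F) : Prop :=
  ∀ x, (H.theta 0 x ∈ S ↔ x ∈ S) ∧ (H.theta 2 x ∈ S ↔ x ∈ S)

lemma pdual_theta0 (H : PreHypermap F) (S : Set F) (x : F) :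
    (H.pdual S).theta 0 x = if x ∈ S then H.theta 2 x else H.theta 0 x := rfl
lemma pdual_theta1 (H : PreHypermap F) (S : Set F) (x : F) :
    (H.pdual S).theta 1 x = H.theta 1 x := rfl
lemma pdual_theta2 (H : PreHypermap F) (S : Set F) (x : F) :
    (H.pdual S).theta 2 x = if x ∈ S then H.theta 0 x else H.theta 2 x := rfl

lemma pdual_isHypermap {H : PreHypermap F} (h : H.IsHypermap) {S : Set F} (hS : H.Sat S) :
    (H.pdual S).IsHypermap := by
  intro i
  fin_cases i
  · refine ⟨fun x => ?_, fun x => ?_⟩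
    · show (H.pdual S).theta 0 ((H.pdual S).theta 0 x) = x
      rw [pdual_theta0, pdual_theta0]
      by_cases hx : x ∈ S
      · simp [hx, (hS x).2, (h 2).1 x]
      · simp [hx, (hS x).1, (h 0).1 x]
    · show (H.pdual S).theta 0 x ≠ x
      rw [pdual_theta0]
      split_ifs
      exacts [(h 2).2 x, (h 0).2 x]
  · exact h 1
  · refine ⟨fun x => ?_, fun x => ?_⟩
    · show (H.pdual S).theta 2 ((H.pdual S).theta 2 x) = x
      rw [pdual_theta2, pdual_theta2]
      by_cases hx : x ∈ S
      · simp [hx, (hS x).1, (h 0).1 x]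
      · simp [hx, (hS x).2, (h 2).1 x]
    · show (H.pdual S).theta 2 x ≠ x
      rw [pdual_theta2]
      split_ifs
      exacts [(h 0).2 x, (h 2).2 x]

lemma pdual_connected [Fintype F] {H : PreHypermap F} (h : H.Connected) (S : Set F) :
    (H.pdual S).Connected := by
  unfold Connected c at *
  rw [orbitCount_eq] at *
  rw [← h]
  suffices InvF {(H.pdual S).theta 0, (H.pdual S).theta 1, (H.pdual S).theta 2} =
      InvF {H.theta 0, H.theta 1, H.theta 2} by rw [this]
  ext g
  simp only [mem_InvF, Set.mem_insert_iff, Set.mem_singleton_iff, forall_eq_or_imp, forall_eq,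
    pdual_theta0, pdual_theta1, pdual_theta2]
  constructor
  · rintro ⟨a, b, c⟩
    refine ⟨fun x => ?_, b, fun x => ?_⟩ <;> have := a x <;> have := c x <;>
      by_cases hx : x ∈ S <;> simp_all
  · rintro ⟨a, b, c⟩
    refine ⟨fun x => ?_, b, fun x => ?_⟩ <;> split_ifs <;> simp_all

lemma sat_orbit {H : PreHypermap F} {S : Set F} (hS : H.Sat S) {a b : F}
    (h : orbitRel {H.theta 0, H.theta 2} a b) : a ∈ S ↔ b ∈ S := by
  induction h with
  | rel a b h =>
    obtain ⟨f, hf, rfl⟩ := h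
    rcases hf with rfl | hf
    · exact (hS a).1.symm
    · rw [Set.mem_singleton_iff] at hf; subst hf; exact (hS a).2.symm
  | refl => rfl
  | symm _ _ _ ih => exact ih.symm
  | trans _ _ _ _ _ i1 i2 => exact i1.trans i2

lemma mem_edge_eq {H : PreHypermap F} {s : Set F} (hs : s ∈ H.edges) {x : F} (hx : x ∈ s) :
    s = {y | orbitRel {H.theta 0, H.theta 2} x y} := by
  obtain ⟨z, rfl⟩ := hs
  ext y
  exact ⟨fun h => Relation.EqvGen.trans _ _ _ (Relation.EqvGen.symm _ _ hx) h,
    fun h => Relation.EqvGen.trans _ _ _ hx h⟩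

lemma edge_nonempty {H : PreHypermap F} {s : Set F} (hs : s ∈ H.edges) : ∃ x, x ∈ s := by
  obtain ⟨z, rfl⟩ := hs
  exact ⟨z, Relation.EqvGen.refl _⟩

lemma sat_sUnion {H : PreHypermap F} {A : Set (Set F)} (hA : A ⊆ H.edges) :
    H.Sat (⋃₀ A) := by
  have key : ∀ f ∈ ({H.theta 0, H.theta 2} : Set (F → F)), ∀ x, f x ∈ ⋃₀ A ↔ x ∈ ⋃₀ A := by
    intro f hf x
    have hr : orbitRel {H.theta 0, H.theta 2} x (f x) := Relation.EqvGen.rel _ _ ⟨f, hf, rfl⟩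
    constructor
    · rintro ⟨s, hs, hx⟩
      refine ⟨s, hs, ?_⟩
      rw [mem_edge_eq (hA hs) hx]
      exact Relation.EqvGen.symm _ _ hr
    · rintro ⟨s, hs, hx⟩
      refine ⟨s, hs, ?_⟩
      rw [mem_edge_eq (hA hs) hx]
      exact hr
  exact fun x => ⟨key _ (by simp) x, key _ (by simp) x⟩

lemma mem_edgeFinset [Fintype F] {H : PreHypermap F} {s : Set F} :
    s ∈ H.edgeFinset ↔ s ∈ H.edges := by simp [edgeFinset]

/-- finset of saturated sets -/
noncomputable def satFinset [Fintype F] (H : PreHypermap F) : Finset (Set F) :=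
  Finset.univ.filter H.Sat

lemma mem_satFinset [Fintype F] {H : PreHypermap F} {s : Set F} :
    s ∈ H.satFinset ↔ H.Sat s := by simp [satFinset]

lemma pdPoly_eq [Fintype F] (H : PreHypermap F) :
    H.pdPoly = ∑ S ∈ H.satFinset, Polynomial.X ^ ((H.pdual S).eulerGenus).toNat := by
  unfold pdPoly
  refine Finset.sum_bij' (fun A _ => ⋃₀ (A : Set (Set F)))
    (fun S _ => H.edgeFinset.filter (fun s => s ⊆ S)) ?_ ?_ ?_ ?_ ?_
  · intro A hA
    rw [mem_satFinset]
    apply sat_sUnion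
    intro s hs
    exact mem_edgeFinset.1 (Finset.mem_powerset.1 hA hs)
  · intro S _
    exact Finset.mem_powerset.2 (Finset.filter_subset _ _)
  · intro A hA
    ext s
    rw [Finset.mem_filter]
    constructor
    · rintro ⟨h1, h2⟩
      rw [mem_edgeFinset] at h1
      obtain ⟨x, hx⟩ := edge_nonempty h1
      obtain ⟨t, ht, hxt⟩ := h2 hx
      have := mem_edge_eq (mem_edgeFinset.1 (Finset.mem_powerset.1 hA ht)) hxt
      rw [mem_edge_eq h1 hx, ← this]
      exact ht
    · intro hs
      exact ⟨Finset.mem_powerset.1 hA hs, Set.subset_sUnion_of_mem (Finset.mem_coe.2 hs)⟩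
  · intro S hS
    rw [mem_satFinset] at hS
    ext x
    constructor
    · rintro ⟨s, hs, hx⟩
      exact (Finset.mem_filter.1 (Finset.mem_coe.1 hs)).2 hx
    · intro hx
      refine ⟨{y | orbitRel {H.theta 0, H.theta 2} x y}, ?_, Relation.EqvGen.refl _⟩
      rw [Finset.mem_coe, Finset.mem_filter, mem_edgeFinset]
      exact ⟨⟨x, rfl⟩, fun y hy => (sat_orbit hS hy).1 hx⟩
  · intro A _; rfl

end aux

section barsec
variable {F₁ F₂ : Type} {H₁ : PreHypermap F₁} {H₂ : PreHypermap F₂} {x : F₁} {y : F₂}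

lemma forall_flags {p : (F₁ ⊕ F₂) ⊕ Fin 4 → Prop} :
    (∀ z, p z) ↔ (∀ a, p (.inl (.inl a))) ∧ (∀ b, p (.inl (.inr b))) ∧
      p (.inr 0) ∧ p (.inr 1) ∧ p (.inr 2) ∧ p (.inr 3) := by
  constructor
  · intro h; exact ⟨fun _ => h _, fun _ => h _, h _, h _, h _, h _⟩
  · rintro ⟨a, b, c0, c1, c2, c3⟩ ((z | z) | z)
    · exact a z
    · exact b z
    · fin_cases z
      exacts [c0, c1, c2, c3]

lemma bar0_1 (a) : (bar H₁ H₂ x y).theta 0 (.inl (.inl a)) = .inl (.inl (H₁.theta 0 a)) := rfl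
lemma bar0_2 (a) : (bar H₁ H₂ x y).theta 0 (.inl (.inr a)) = .inl (.inr (H₂.theta 0 a)) := rfl
lemma bar2_1 (a) : (bar H₁ H₂ x y).theta 2 (.inl (.inl a)) = .inl (.inl (H₁.theta 2 a)) := rfl
lemma bar2_2 (a) : (bar H₁ H₂ x y).theta 2 (.inl (.inr a)) = .inl (.inr (H₂.theta 2 a)) := rfl
lemma bar0_k (k) : (bar H₁ H₂ x y).theta 0 (.inr k) = .inr (k + 2) := by
  have : ∀ k, Equiv.swap (0 : Fin 4) 2 (Equiv.swap (1 : Fin 4) 3 k) = k + 2 := by decide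
  exact congrArg Sum.inr (this k)
lemma bar2_k (k) : (bar H₁ H₂ x y).theta 2 (.inr k) = .inr (![1, 0, 3, 2] k) := by
  have : ∀ k, Equiv.swap (0 : Fin 4) 1 (Equiv.swap (2 : Fin 4) 3 k) = ![1, 0, 3, 2] k := by decide
  exact congrArg Sum.inr (this k)

lemma bar_inv0 (g : (F₁ ⊕ F₂) ⊕ Fin 4 → ZMod 2) :
    (∀ z, g ((bar H₁ H₂ x y).theta 0 z) = g z) ↔
      (∀ a, g (.inl (.inl (H₁.theta 0 a))) = g (.inl (.inl a))) ∧
      (∀ a, g (.inl (.inr (H₂.theta 0 a))) = g (.inl (.inr a))) ∧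
      g (.inr 2) = g (.inr 0) ∧ g (.inr 3) = g (.inr 1) := by
  rw [forall_flags]
  simp only [bar0_1, bar0_2, bar0_k]
  have e0 : (0 + 2 : Fin 4) = 2 := by decide
  have e1 : (1 + 2 : Fin 4) = 3 := by decide
  have e2 : (2 + 2 : Fin 4) = 0 := by decide
  have e3 : (3 + 2 : Fin 4) = 1 := by decide
  rw [e0, e1, e2, e3]
  constructor
  · rintro ⟨a, b, c, d, _, _⟩; exact ⟨a, b, c, d⟩
  · rintro ⟨a, b, c, d⟩; exact ⟨a, b, c, d, c.symm, d.symm⟩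

lemma bar_inv2 (g : (F₁ ⊕ F₂) ⊕ Fin 4 → ZMod 2) :
    (∀ z, g ((bar H₁ H₂ x y).theta 2 z) = g z) ↔
      (∀ a, g (.inl (.inl (H₁.theta 2 a))) = g (.inl (.inl a))) ∧
      (∀ a, g (.inl (.inr (H₂.theta 2 a))) = g (.inl (.inr a))) ∧
      g (.inr 1) = g (.inr 0) ∧ g (.inr 3) = g (.inr 2) := by
  rw [forall_flags]
  simp only [bar2_1, bar2_2, bar2_k]
  constructor
  · rintro ⟨a, b, c, _, d, _⟩; exact ⟨a, b, c, d⟩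
  · rintro ⟨a, b, c, d⟩; exact ⟨a, b, c, c.symm, d, d.symm⟩

lemma bar_inv1 (h₁ : H₁.IsHypermap) (h₂ : H₂.IsHypermap) (g : (F₁ ⊕ F₂) ⊕ Fin 4 → ZMod 2) :
    (∀ z, g ((bar H₁ H₂ x y).theta 1 z) = g z) ↔
      (∀ a, a ≠ x → a ≠ H₁.theta 1 x → g (.inl (.inl (H₁.theta 1 a))) = g (.inl (.inl a))) ∧
      (∀ a, a ≠ y → a ≠ H₂.theta 1 y → g (.inl (.inr (H₂.theta 1 a))) = g (.inl (.inr a))) ∧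
      g (.inr 0) = g (.inl (.inl x)) ∧ g (.inr 1) = g (.inl (.inl (H₁.theta 1 x))) ∧
      g (.inr 2) = g (.inl (.inr y)) ∧ g (.inr 3) = g (.inl (.inr (H₂.theta 1 y))) := by
  have n1 := (h₁ 1).2 x
  have n2 := (h₂ 1).2 y
  have t0 : (bar H₁ H₂ x y).theta 1 (.inr 0) = .inl (.inl x) := by simp [bar]
  have t1 : (bar H₁ H₂ x y).theta 1 (.inr 1) = .inl (.inl (H₁.theta 1 x)) := by simp [bar]
  have t2 : (bar H₁ H₂ x y).theta 1 (.inr 2) = .inl (.inr y) := by simp [bar]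
  have t3 : (bar H₁ H₂ x y).theta 1 (.inr 3) = .inl (.inr (H₂.theta 1 y)) := by simp [bar]
  have tx : (bar H₁ H₂ x y).theta 1 (.inl (.inl x)) = .inr 0 := by simp [bar]
  have tx' : (bar H₁ H₂ x y).theta 1 (.inl (.inl (H₁.theta 1 x))) = .inr 1 := by simp [bar, n1]
  have ty : (bar H₁ H₂ x y).theta 1 (.inl (.inr y)) = .inr 2 := by simp [bar]
  have ty' : (bar H₁ H₂ x y).theta 1 (.inl (.inr (H₂.theta 1 y))) = .inr 3 := by simp [bar, n2]
  have ta : ∀ a, a ≠ x → a ≠ H₁.theta 1 x →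
      (bar H₁ H₂ x y).theta 1 (.inl (.inl a)) = .inl (.inl (H₁.theta 1 a)) := by
    intro a p q; simp [bar, p, q]
  have tb : ∀ a, a ≠ y → a ≠ H₂.theta 1 y →
      (bar H₁ H₂ x y).theta 1 (.inl (.inr a)) = .inl (.inr (H₂.theta 1 a)) := by
    intro a p q; simp [bar, p, q]
  rw [forall_flags, t0, t1, t2, t3]
  constructor
  · rintro ⟨a, b, c0, c1, c2, c3⟩
    refine ⟨fun z p q => ?_, fun z p q => ?_, c0.symm, c1.symm, c2.symm, c3.symm⟩
    · rw [← ta z p q]; exact a z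
    · rw [← tb z p q]; exact b z
  · rintro ⟨a, b, c0, c1, c2, c3⟩
    refine ⟨fun z => ?_, fun z => ?_, c0.symm, c1.symm, c2.symm, c3.symm⟩
    · by_cases p : z = x
      · rw [p, tx]; exact c0
      by_cases q : z = H₁.theta 1 x
      · rw [q, tx']; exact c1
      rw [ta z p q]; exact a z p q
    · by_cases p : z = y
      · rw [p, ty]; exact c2
      by_cases q : z = H₂.theta 1 y
      · rw [q, ty']; exact c3
      rw [tb z p q]; exact b z p q

/-- The three kinds of gluing of invariant functions. -/
lemma glue1 [Fintype F₁] [Fintype F₂] (x : F₁) (y : F₂)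
    (U : Submodule (ZMod 2) (F₁ → ZMod 2)) (W : Submodule (ZMod 2) (F₂ → ZMod 2))
    (P : Submodule (ZMod 2) ((F₁ ⊕ F₂) ⊕ Fin 4 → ZMod 2))
    (h : ∀ g, g ∈ P ↔ (fun a => g (.inl (.inl a))) ∈ U ∧ (fun a => g (.inl (.inr a))) ∈ W ∧
      g (.inr 0) = g (.inl (.inl x)) ∧ g (.inr 1) = g (.inl (.inl x)) ∧
      g (.inr 2) = g (.inl (.inr y)) ∧ g (.inr 3) = g (.inl (.inr y))) :
    Module.finrank (ZMod 2) P = Module.finrank (ZMod 2) U + Module.finrank (ZMod 2) W := by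
  rw [← Module.finrank_prod]
  let e : P ≃ₗ[ZMod 2] U × W :=
    { toFun := fun g => (⟨fun a => g.1 (.inl (.inl a)), ((h g.1).1 g.2).1⟩,
        ⟨fun a => g.1 (.inl (.inr a)), ((h g.1).1 g.2).2.1⟩)
      map_add' := fun _ _ => rfl
      map_smul' := fun _ _ => rfl
      invFun := fun u => ⟨Sum.elim (Sum.elim u.1.1 u.2.1)
          ![u.1.1 x, u.1.1 x, u.2.1 y, u.2.1 y],
        (h _).2 ⟨u.1.2, u.2.2, rfl, rfl, rfl, rfl⟩⟩
      left_inv := by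
        intro g
        obtain ⟨_, _, c0, c1, c2, c3⟩ := (h g.1).1 g.2
        apply Subtype.ext
        rw [funext_iff, forall_flags]
        exact ⟨fun _ => rfl, fun _ => rfl, c0.symm, c1.symm, c2.symm, c3.symm⟩
      right_inv := fun _ => rfl }
  exact e.finrank_eq

lemma glue2 [Fintype F₁] [Fintype F₂] (x : F₁) (y : F₂)
    (U : Submodule (ZMod 2) (F₁ → ZMod 2)) (W : Submodule (ZMod 2) (F₂ → ZMod 2))
    (hU : (fun _ => 1) ∈ U)
    (P : Submodule (ZMod 2) ((F₁ ⊕ F₂) ⊕ Fin 4 → ZMod 2))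
    (h : ∀ g, g ∈ P ↔ (fun a => g (.inl (.inl a))) ∈ U ∧ (fun a => g (.inl (.inr a))) ∈ W ∧
      g (.inr 0) = g (.inl (.inl x)) ∧ g (.inr 1) = g (.inl (.inl x)) ∧
      g (.inr 2) = g (.inl (.inr y)) ∧ g (.inr 3) = g (.inl (.inr y)) ∧
      g (.inl (.inl x)) = g (.inl (.inr y))) :
    Module.finrank (ZMod 2) P + 1 = Module.finrank (ZMod 2) U + Module.finrank (ZMod 2) W := by
  rw [← Module.finrank_prod]
  let φ : U × W →ₗ[ZMod 2] ZMod 2 :=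
    { toFun := fun u => u.1.1 x - u.2.1 y
      map_add' := by intro u v; simp; ring
      map_smul' := by intro c u; simp; ring }
  let e : P ≃ₗ[ZMod 2] LinearMap.ker φ :=
    { toFun := fun g => ⟨(⟨fun a => g.1 (.inl (.inl a)), ((h g.1).1 g.2).1⟩,
        ⟨fun a => g.1 (.inl (.inr a)), ((h g.1).1 g.2).2.1⟩),
          sub_eq_zero.2 ((h g.1).1 g.2).2.2.2.2.2.2⟩
      map_add' := fun _ _ => rfl
      map_smul' := fun _ _ => rfl
      invFun := fun u => ⟨Sum.elim (Sum.elim u.1.1.1 u.1.2.1)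
          ![u.1.1.1 x, u.1.1.1 x, u.1.2.1 y, u.1.2.1 y],
        (h _).2 ⟨u.1.1.2, u.1.2.2, rfl, rfl, rfl, rfl, sub_eq_zero.1 u.2⟩⟩
      left_inv := by
        intro g
        obtain ⟨_, _, c0, c1, c2, c3, _⟩ := (h g.1).1 g.2
        apply Subtype.ext
        rw [funext_iff, forall_flags]
        exact ⟨fun _ => rfl, fun _ => rfl, c0.symm, c1.symm, c2.symm, c3.symm⟩
      right_inv := fun _ => rfl }
  have hs : LinearMap.range φ = ⊤ := by
    rw [LinearMap.range_eq_top]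
    intro c
    refine ⟨(c • ⟨_, hU⟩, 0), ?_⟩
    simp [φ]
  have := LinearMap.finrank_range_add_finrank_ker φ
  rw [hs, finrank_top, Module.finrank_self] at this
  rw [e.finrank_eq]
  omega

lemma glue3 [Fintype F₁] [Fintype F₂]
    (U : Submodule (ZMod 2) (F₁ → ZMod 2)) (W : Submodule (ZMod 2) (F₂ → ZMod 2))
    (P : Submodule (ZMod 2) ((F₁ ⊕ F₂) ⊕ Fin 4 → ZMod 2))
    (h : ∀ g, g ∈ P ↔ (fun a => g (.inl (.inl a))) ∈ U ∧ (fun a => g (.inl (.inr a))) ∈ W ∧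
      g (.inr 1) = g (.inr 0) ∧ g (.inr 2) = g (.inr 0) ∧ g (.inr 3) = g (.inr 0)) :
    Module.finrank (ZMod 2) P =
      Module.finrank (ZMod 2) U + Module.finrank (ZMod 2) W + 1 := by
  rw [← Module.finrank_prod, ← Module.finrank_self (ZMod 2), ← Module.finrank_prod]
  let e : P ≃ₗ[ZMod 2] (U × W) × ZMod 2 :=
    { toFun := fun g => ((⟨fun a => g.1 (.inl (.inl a)), ((h g.1).1 g.2).1⟩,
        ⟨fun a => g.1 (.inl (.inr a)), ((h g.1).1 g.2).2.1⟩), g.1 (.inr 0))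
      map_add' := fun _ _ => rfl
      map_smul' := fun _ _ => rfl
      invFun := fun u => ⟨Sum.elim (Sum.elim u.1.1.1 u.1.2.1) (fun _ => u.2),
        (h _).2 ⟨u.1.1.2, u.1.2.2, rfl, rfl, rfl⟩⟩
      left_inv := by
        intro g
        obtain ⟨_, _, c1, c2, c3⟩ := (h g.1).1 g.2
        apply Subtype.ext
        rw [funext_iff, forall_flags]
        exact ⟨fun _ => rfl, fun _ => rfl, rfl, c1.symm, c2.symm, c3.symm⟩
      right_inv := fun _ => rfl }
  exact e.finrank_eq

lemma bar_eulerGenus [Fintype F₁] [Fintype F₂] (h₁ : H₁.IsHypermap) (h₂ : H₂.IsHypermap)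
    (hc₁ : H₁.Connected) (hc₂ : H₂.Connected) :
    (bar H₁ H₂ x y).eulerGenus = H₁.eulerGenus + H₂.eulerGenus := by
  have par1 := fun (g : F₁ → ZMod 2) (hg : ∀ a, g (H₁.theta 0 a) = g a) hb =>
    parity (h₁ 0).1 (h₁ 0).2 (h₁ 1).1 (h₁ 1).2 hg x hb
  have par2 := fun (g : F₂ → ZMod 2) (hg : ∀ a, g (H₂.theta 0 a) = g a) hb =>
    parity (h₂ 0).1 (h₂ 0).2 (h₂ 1).1 (h₂ 1).2 hg y hb
  have full1 : ∀ (g : F₁ → ZMod 2), (∀ a, a ≠ x → a ≠ H₁.theta 1 x → g (H₁.theta 1 a) = g a) →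
      g (H₁.theta 1 x) = g x → ∀ a, g (H₁.theta 1 a) = g a := by
    intro g hg hx a
    by_cases p : a = x
    · rw [p]; exact hx
    by_cases q : a = H₁.theta 1 x
    · rw [q, (h₁ 1).1, hx]
    exact hg a p q
  have full2 : ∀ (g : F₂ → ZMod 2), (∀ a, a ≠ y → a ≠ H₂.theta 1 y → g (H₂.theta 1 a) = g a) →
      g (H₂.theta 1 y) = g y → ∀ a, g (H₂.theta 1 a) = g a := by
    intro g hg hx a
    by_cases p : a = y
    · rw [p]; exact hx
    by_cases q : a = H₂.theta 1 y
    · rw [q, (h₂ 1).1, hx]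
    exact hg a p q
  have ev1 := even_card (h₁ 0).1 (h₁ 0).2
  have ev2 := even_card (h₂ 0).1 (h₂ 0).2
  have hv := glue1 x y (InvF {H₁.theta 1, H₁.theta 2}) (InvF {H₂.theta 1, H₂.theta 2})
    (InvF {(bar H₁ H₂ x y).theta 1, (bar H₁ H₂ x y).theta 2}) (by
      intro g
      simp only [mem_InvF, Set.mem_insert_iff, Set.mem_singleton_iff, forall_eq_or_imp, forall_eq]
      rw [bar_inv1 h₁ h₂, bar_inv2]
      constructor
      · rintro ⟨⟨a, b, c0, c1, c2, c3⟩, a', b', d0, d1⟩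
        exact ⟨⟨full1 (fun z => g (.inl (.inl z))) a (by rw [← c1, d0, c0]), a'⟩,
          ⟨full2 (fun z => g (.inl (.inr z))) b (by rw [← c3, d1, c2]), b'⟩,
          c0, d0.trans c0, c2, d1.trans c2⟩
      · rintro ⟨⟨a, a'⟩, ⟨b, b'⟩, c0, c1, c2, c3⟩
        exact ⟨⟨fun z _ _ => a z, fun z _ _ => b z, c0, c1.trans (a x).symm, c2,
          c3.trans (b y).symm⟩, a', b', c1.trans c0.symm, c3.trans c2.symm⟩)
  have hf := glue2 x y (InvF {H₁.theta 0, H₁.theta 1}) (InvF {H₂.theta 0, H₂.theta 1})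
    (fun _ _ _ => rfl)
    (InvF {(bar H₁ H₂ x y).theta 0, (bar H₁ H₂ x y).theta 1}) (by
      intro g
      simp only [mem_InvF, Set.mem_insert_iff, Set.mem_singleton_iff, forall_eq_or_imp, forall_eq]
      rw [bar_inv1 h₁ h₂, bar_inv0]
      constructor
      · rintro ⟨⟨a', b', d0, d1⟩, a, b, c0, c1, c2, c3⟩
        have p1 := par1 (fun z => g (.inl (.inl z))) a' a
        have p2 := par2 (fun z => g (.inl (.inr z))) b' b
        exact ⟨⟨a', full1 (fun z => g (.inl (.inl z))) a p1⟩,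
          ⟨b', full2 (fun z => g (.inl (.inr z))) b p2⟩,
          c0, c1.trans p1, c2, c3.trans p2, by rw [← c0, ← d0, c2]⟩
      · rintro ⟨⟨a', a⟩, ⟨b', b⟩, c0, c1, c2, c3, c4⟩
        exact ⟨⟨a', b', by rw [c2, c0, c4], by rw [c3, c1, c4]⟩, fun z _ _ => a z,
          fun z _ _ => b z, c0, c1.trans (a x).symm, c2, c3.trans (b y).symm⟩)
  have hc := glue2 x y (InvF {H₁.theta 0, H₁.theta 1, H₁.theta 2})
    (InvF {H₂.theta 0, H₂.theta 1, H₂.theta 2})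
    (fun _ _ _ => rfl)
    (InvF {(bar H₁ H₂ x y).theta 0, (bar H₁ H₂ x y).theta 1, (bar H₁ H₂ x y).theta 2}) (by
      intro g
      simp only [mem_InvF, Set.mem_insert_iff, Set.mem_singleton_iff, forall_eq_or_imp, forall_eq]
      rw [bar_inv1 h₁ h₂, bar_inv0, bar_inv2]
      constructor
      · rintro ⟨⟨a', b', d0, d1⟩, ⟨a, b, c0, c1, c2, c3⟩, a'', b'', _, _⟩
        have p1 := par1 (fun z => g (.inl (.inl z))) a' a
        have p2 := par2 (fun z => g (.inl (.inr z))) b' b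
        exact ⟨⟨a', full1 (fun z => g (.inl (.inl z))) a p1, a''⟩,
          ⟨b', full2 (fun z => g (.inl (.inr z))) b p2, b''⟩,
          c0, c1.trans p1, c2, c3.trans p2, by rw [← c0, ← d0, c2]⟩
      · rintro ⟨⟨a', a, a''⟩, ⟨b', b, b''⟩, c0, c1, c2, c3, c4⟩
        exact ⟨⟨a', b', by rw [c2, c0, c4], by rw [c3, c1, c4]⟩, ⟨fun z _ _ => a z,
          fun z _ _ => b z, c0, c1.trans (a x).symm, c2, c3.trans (b y).symm⟩,
          a'', b'', c1.trans c0.symm, c3.trans c2.symm⟩)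
  have he := glue3 (InvF {H₁.theta 0, H₁.theta 2}) (InvF {H₂.theta 0, H₂.theta 2})
    (InvF {(bar H₁ H₂ x y).theta 0, (bar H₁ H₂ x y).theta 2}) (by
      intro g
      simp only [mem_InvF, Set.mem_insert_iff, Set.mem_singleton_iff, forall_eq_or_imp, forall_eq]
      rw [bar_inv0, bar_inv2]
      constructor
      · rintro ⟨⟨a, b, c, d⟩, a', b', c', d'⟩
        exact ⟨⟨a, a'⟩, ⟨b, b'⟩, c', c, d.trans c'⟩
      · rintro ⟨⟨a, a'⟩, ⟨b, b'⟩, c, d, e⟩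
        exact ⟨⟨a, b, d, e.trans c.symm⟩, a', b', c, e.trans d.symm⟩)
  unfold Connected c at hc₁ hc₂
  rw [orbitCount_eq] at hc₁ hc₂
  have hcard : Nat.card ((F₁ ⊕ F₂) ⊕ Fin 4) = Nat.card F₁ + Nat.card F₂ + 4 := by
    rw [Nat.card_sum, Nat.card_sum, Nat.card_fin]
  unfold eulerGenus chi v e PreHypermap.f c
  simp only [orbitCount_eq]
  rw [hcard]
  omega

/-- The set of flags of the amalgamation glued from its parts. -/
def glueSet (S : Set F₁) (T : Set F₂) (d : Prop) : Set ((F₁ ⊕ F₂) ⊕ Fin 4) :=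
  {z | Sum.elim (Sum.elim (· ∈ S) (· ∈ T)) (fun _ => d) z}

lemma bar_pdual_false (S : Set F₁) (T : Set F₂) :
    (bar H₁ H₂ x y).pdual (glueSet S T False) = bar (H₁.pdual S) (H₂.pdual T) x y := by
  have : ∀ i z, ((bar H₁ H₂ x y).pdual (glueSet S T False)).theta i z
      = (bar (H₁.pdual S) (H₂.pdual T) x y).theta i z := by
    intro i
    fin_cases i
    · show ∀ z, ((bar H₁ H₂ x y).pdual (glueSet S T False)).theta 0 z
        = (bar (H₁.pdual S) (H₂.pdual T) x y).theta 0 z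
      rintro ((z | z) | z) <;>
        simp only [pdual_theta0, bar0_1, bar0_2, bar0_k, bar2_1, bar2_2, bar2_k, glueSet,
          Set.mem_ofPred_eq, Sum.elim_inl, Sum.elim_inr, if_false]
      · split_ifs <;> simp_all
      · split_ifs <;> simp_all
    · intro z; rfl
    · show ∀ z, ((bar H₁ H₂ x y).pdual (glueSet S T False)).theta 2 z
        = (bar (H₁.pdual S) (H₂.pdual T) x y).theta 2 z
      rintro ((z | z) | z) <;>
        simp only [pdual_theta2, bar0_1, bar0_2, bar0_k, bar2_1, bar2_2, bar2_k, glueSet,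
          Set.mem_ofPred_eq, Sum.elim_inl, Sum.elim_inr, if_false]
      · split_ifs <;> simp_all
      · split_ifs <;> simp_all
  cases h : (bar H₁ H₂ x y).pdual (glueSet S T False)
  cases h' : bar (H₁.pdual S) (H₂.pdual T) x y
  rw [h, h'] at this
  congr 1
  funext i z
  exact this i z

lemma bar_pdual_true (S : Set F₁) (T : Set F₂) :
    (bar H₁ H₂ x y).pdual (glueSet S T True) =
      (bar (H₁.pdual S).dual (H₂.pdual T).dual x y).dual := by
  have : ∀ i z, ((bar H₁ H₂ x y).pdual (glueSet S T True)).theta i z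
      = (bar (H₁.pdual S).dual (H₂.pdual T).dual x y).dual.theta i z := by
    intro i
    fin_cases i
    · show ∀ z, ((bar H₁ H₂ x y).pdual (glueSet S T True)).theta 0 z
        = (bar (H₁.pdual S).dual (H₂.pdual T).dual x y).theta 2 z
      rintro ((z | z) | z) <;>
        simp only [pdual_theta0, bar0_1, bar0_2, bar0_k, bar2_1, bar2_2, bar2_k, glueSet,
          dual_theta2, Set.mem_ofPred_eq, Sum.elim_inl, Sum.elim_inr, if_true]
      · split_ifs <;> simp_all
      · split_ifs <;> simp_all
    · intro z; rfl
    · show ∀ z, ((bar H₁ H₂ x y).pdual (glueSet S T True)).theta 2 z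
        = (bar (H₁.pdual S).dual (H₂.pdual T).dual x y).theta 0 z
      rintro ((z | z) | z) <;>
        simp only [pdual_theta2, bar0_1, bar0_2, bar0_k, bar2_1, bar2_2, bar2_k, glueSet,
          dual_theta0, Set.mem_ofPred_eq, Sum.elim_inl, Sum.elim_inr, if_true]
      · split_ifs <;> simp_all
      · split_ifs <;> simp_all
  cases h : (bar H₁ H₂ x y).pdual (glueSet S T True)
  cases h' : (bar (H₁.pdual S).dual (H₂.pdual T).dual x y).dual
  rw [h, h'] at this
  congr 1
  funext i z
  exact this i z

lemma glue_eulerGenus [Fintype F₁] [Fintype F₂] (h₁ : H₁.IsHypermap) (h₂ : H₂.IsHypermap)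
    (hc₁ : H₁.Connected) (hc₂ : H₂.Connected) {S : Set F₁} {T : Set F₂}
    (hS : H₁.Sat S) (hT : H₂.Sat T) (d : Prop) :
    ((bar H₁ H₂ x y).pdual (glueSet S T d)).eulerGenus.toNat =
      (H₁.pdual S).eulerGenus.toNat + (H₂.pdual T).eulerGenus.toNat := by
  have k1 := pdual_isHypermap h₁ hS
  have k2 := pdual_isHypermap h₂ hT
  have c1 := pdual_connected hc₁ S
  have c2 := pdual_connected hc₂ T
  rw [← Int.toNat_add (eulerGenus_nonneg _ k1) (eulerGenus_nonneg _ k2)]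
  congr 1
  by_cases hd : d
  · rw [eq_true hd, bar_pdual_true, dual_eulerGenus, bar_eulerGenus (dual_isHypermap k1)
      (dual_isHypermap k2) ((dual_c _).trans c1) ((dual_c _).trans c2), dual_eulerGenus,
      dual_eulerGenus]
  · rw [eq_false hd, bar_pdual_false, bar_eulerGenus k1 k2 c1 c2]

lemma sat_bar (R : Set ((F₁ ⊕ F₂) ⊕ Fin 4)) :
    (bar H₁ H₂ x y).Sat R ↔ ∃ S T d, H₁.Sat S ∧ H₂.Sat T ∧ R = glueSet S T d := by
  constructor
  · intro h
    refine ⟨{a | (Sum.inl (Sum.inl a) : (F₁ ⊕ F₂) ⊕ Fin 4) ∈ R},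
      {a | (Sum.inl (Sum.inr a) : (F₁ ⊕ F₂) ⊕ Fin 4) ∈ R}, .inr 0 ∈ R,
      fun a => h (.inl (.inl a)), fun a => h (.inl (.inr a)), ?_⟩
    have a0 := (h (.inr 0)).1
    have a1 := (h (.inr 0)).2
    have a2 := (h (.inr 1)).1
    rw [bar0_k] at a0 a2
    rw [bar2_k] at a1
    rw [Set.ext_iff, forall_flags]
    exact ⟨fun _ => Iff.rfl, fun _ => Iff.rfl, Iff.rfl, a1, a0, a2.trans a1⟩
  · rintro ⟨S, T, d, hS, hT, rfl⟩
    rintro ((z | z) | z)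
    · exact hS z
    · exact hT z
    · rw [bar0_k, bar2_k]; exact ⟨Iff.rfl, Iff.rfl⟩

end barsec
end PreHypermap

open PreHypermap in
/-- For a bar-amalgamation of two connected hypermaps (the connecting hyperedge meeting
one corner of each), `∂ε_(H₁ ⊕ H₂)(z) = 2 · ∂ε_(H₁)(z) · ∂ε_(H₂)(z)`. -/
theorem statement_14 {F₁ F₂ : Type} [Fintype F₁] [Fintype F₂]
    (H₁ : PreHypermap F₁) (H₂ : PreHypermap F₂)
    (h₁ : H₁.IsHypermap) (h₂ : H₂.IsHypermap)
    (hc₁ : H₁.Connected) (hc₂ : H₂.Connected) (x : F₁) (y : F₂) :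
    (bar H₁ H₂ x y).pdPoly = 2 * H₁.pdPoly * H₂.pdPoly := by
  have key : (bar H₁ H₂ x y).pdPoly = ∑ p ∈ (H₁.satFinset ×ˢ H₂.satFinset) ×ˢ
      (Finset.univ : Finset Bool), (Polynomial.X ^ ((H₁.pdual p.1.1).eulerGenus).toNat *
        Polynomial.X ^ ((H₂.pdual p.1.2).eulerGenus).toNat : Polynomial ℕ) := by
    rw [pdPoly_eq]
    symm
    refine Finset.sum_bij (fun p _ => glueSet p.1.1 p.1.2 (p.2 = true)) ?_ ?_ ?_ ?_
    · rintro ⟨⟨S, T⟩, d⟩ h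
      simp only [Finset.mem_product, mem_satFinset] at h ⊢
      exact (sat_bar _).2 ⟨S, T, _, h.1.1, h.1.2, rfl⟩
    · rintro ⟨⟨S, T⟩, d⟩ _ ⟨⟨S', T'⟩, d'⟩ _ h
      rw [Set.ext_iff, forall_flags] at h
      obtain ⟨a, b, c, _⟩ := h
      have hS : S = S' := Set.ext a
      have hT : T = T' := Set.ext b
      have hd : d = d' := Bool.eq_iff_iff.2 c
      rw [hS, hT, hd]
    · intro R hR
      obtain ⟨S, T, d, hS, hT, rfl⟩ := (sat_bar _).1 (mem_satFinset.1 hR)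
      refine ⟨((S, T), decide d), ?_, ?_⟩
      · simp only [Finset.mem_product, mem_satFinset, Finset.mem_univ, and_true]
        exact ⟨hS, hT⟩
      · simp
    · rintro ⟨⟨S, T⟩, d⟩ h
      simp only [Finset.mem_product, mem_satFinset] at h
      rw [glue_eulerGenus h₁ h₂ hc₁ hc₂ h.1.1 h.1.2, pow_add]
  rw [key, Finset.sum_product, Finset.sum_product, pdPoly_eq H₁, pdPoly_eq H₂, mul_assoc,
    Finset.sum_mul_sum, Finset.mul_sum]
  refine Finset.sum_congr rfl fun S _ => ?_
  rw [Finset.mul_sum]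
  refine Finset.sum_congr rfl fun T _ => ?_
  rw [Fintype.sum_bool, two_mul]
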